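/- Suppose the bipolar max-product fuzzy relation equation max_{j=1..m} max(a_j^+ · x_j, a_j^- · n_P(x_j)) = 0 is solvable. If there exists k ∈ {1,...,m} such that a_k^- > 0, then the set of solutions of the equation has no minimal element: for every solution there exists a strictly smaller solution. -/

import Mathlib

open Finset
open scoped Classical

/-- Product negation: `nP 0 = 1`, `nP x = 0` for `x ≠ 0`. -/
noncomputable def nP (x : ℝ) : ℝ := if x = 0 then 1 else 0

/-- Residuated implication of the product: `resP z x = min 1 (z / x)` for `x > 0`,
and `resP z 0 = 1`. -/
noncomputable def resP (z x : ℝ) : ℝ := if x = 0 then 1 else min 1 (z / x)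

/-- Left-hand side of a bipolar max-product fuzzy relation equation:
`max_{j=1..m} max (a_j^+ * x_j) (a_j^- * nP (x_j))`. -/
noncomputable def eqLHS {m : ℕ} (hm : 0 < m) (ap an : Fin m → ℝ) (x : Fin m → ℝ) : ℝ :=
  Finset.univ.sup' ⟨⟨0, hm⟩, Finset.mem_univ _⟩
    (fun j => max (ap j * x j) (an j * nP (x j)))

/-- `x` is a solution of the bipolar max-product FRE with independent term `b`. -/
def IsSol {m : ℕ} (hm : 0 < m) (ap an : Fin m → ℝ) (b : ℝ) (x : Fin m → ℝ) : Prop :=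
  (∀ j, x j ∈ Set.Icc (0:ℝ) 1) ∧ eqLHS hm ap an x = b

/-!
Scaling `x` by `c > 0` keeps its zero pattern, so it fixes every `nP (x j)` and preserves the sign
of every `ap j * x j`. Comparison of the maximum with `0` only sees these signs, so the solutions
with independent term `0` are closed under scaling by `c ∈ (0, 1]`, and `0` is the only candidate
for a minimal one. It is not a solution when some `an k` is positive, because `nP 0 = 1`.
-/

theorem nP_smul {c : ℝ} (hc : c ≠ 0) (t : ℝ) : nP (c • t) = nP t := by
  simp only [nP, smul_eq_zero_iff_right hc]

section LeftHandSide

variable {m : ℕ} {hm : 0 < m} {ap an x : Fin m → ℝ} {b c : ℝ}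

theorem eqLHS_le_iff :
    eqLHS hm ap an x ≤ b ↔ ∀ j, ap j * x j ≤ b ∧ an j * nP (x j) ≤ b :=
  (Finset.sup'_le_iff _ _).trans <| by simp only [Finset.mem_univ, true_imp_iff, max_le_iff]

theorem le_eqLHS_iff :
    b ≤ eqLHS hm ap an x ↔ ∃ j, b ≤ ap j * x j ∨ b ≤ an j * nP (x j) :=
  (Finset.le_sup'_iff _).trans <| by simp only [Finset.mem_univ, true_and, le_max_iff]

theorem eqLHS_smul_nonpos_iff (hc : 0 < c) :
    eqLHS hm ap an (c • x) ≤ 0 ↔ eqLHS hm ap an x ≤ 0 := by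
  simp only [eqLHS_le_iff, Pi.smul_apply, nP_smul hc.ne', mul_smul_comm,
    smul_nonpos_iff_nonpos_of_pos_left hc]

theorem eqLHS_smul_nonneg_iff (hc : 0 < c) :
    0 ≤ eqLHS hm ap an (c • x) ↔ 0 ≤ eqLHS hm ap an x := by
  simp only [le_eqLHS_iff, Pi.smul_apply, nP_smul hc.ne', mul_smul_comm,
    smul_nonneg_iff_nonneg_of_pos_left hc]

theorem eqLHS_smul_eq_zero_iff (hc : 0 < c) :
    eqLHS hm ap an (c • x) = 0 ↔ eqLHS hm ap an x = 0 := by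
  rw [le_antisymm_iff, eqLHS_smul_nonpos_iff hc, eqLHS_smul_nonneg_iff hc, ← le_antisymm_iff]

theorem le_eqLHS_zero (k : Fin m) : an k ≤ eqLHS hm ap an 0 :=
  le_eqLHS_iff.2 ⟨k, .inr (by simp [nP])⟩

end LeftHandSide

namespace IsSol

variable {m : ℕ} {hm : 0 < m} {ap an x : Fin m → ℝ} {b c : ℝ}

theorem nonneg (hx : IsSol hm ap an b x) : 0 ≤ x :=
  fun j => (hx.1 j).1

theorem smul (hx : IsSol hm ap an 0 x) (hc : 0 < c) (hc' : c ≤ 1) :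
    IsSol hm ap an 0 (c • x) :=
  ⟨fun j => unitInterval.mul_mem ⟨hc.le, hc'⟩ (hx.1 j), (eqLHS_smul_eq_zero_iff hc).2 hx.2⟩

theorem ne_zero {k : Fin m} (hx : IsSol hm ap an b x) (hk : b < an k) : x ≠ 0 := by
  rintro rfl
  exact (hk.trans_le (le_eqLHS_zero k)).ne' hx.2

theorem exists_lt (hx : IsSol hm ap an 0 x) (hx₀ : x ≠ 0) :
    ∃ y, IsSol hm ap an 0 y ∧ y < x :=
  have x_pos : 0 < x := hx.nonneg.lt_of_ne' hx₀
  ⟨(1 / 2 : ℝ) • x, hx.smul one_half_pos one_half_lt_one.le,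
    smul_lt_of_lt_one_left x_pos one_half_lt_one⟩

end IsSol

theorem stmt9_general {m : ℕ} (hm : 0 < m) (ap an : Fin m → ℝ) {k : Fin m} (hk : 0 < an k) :
    ∀ x, IsSol hm ap an 0 x → ∃ y, IsSol hm ap an 0 y ∧ y < x :=
  fun _ hx => hx.exists_lt (hx.ne_zero hk)

theorem stmt9 (m : ℕ) (hm : 0 < m) (ap an : Fin m → ℝ)
    (hap : ∀ j, ap j ∈ Set.Icc (0:ℝ) 1) (han : ∀ j, an j ∈ Set.Icc (0:ℝ) 1)
    (hsolv : ∃ x, IsSol hm ap an 0 x)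
    (k : Fin m) (hk : 0 < an k) :
    ∀ x, IsSol hm ap an 0 x → ∃ y, IsSol hm ap an 0 y ∧ y < x :=
  stmt9_general hm ap an hk
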